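/- Let N be a nilpotent-independent (NI) subset of M(d,q) and suppose there exist real constants a, k > 0 such that |N_i|/|GL(i,q)| \ge a - k q^{-i} for all 1 \le i \le d. Then |N|/|M(d,q)| \ge a - (a+k) d q^{-d} \ge a - (a+k)(2q/3)^{-d}, where |M(d,q)| = q^{d^2}. -/

import Mathlib

open Matrix Finset

/-- `Vinv X` : the "invertible part" subspace, `range (X^d)`. -/
noncomputable def Vinv {F : Type*} [Field F] {d : ℕ} (X : Matrix (Fin d) (Fin d) F) :
    Submodule F (Fin d → F) :=
  LinearMap.range (X.mulVecLin ^ d)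

noncomputable def Vnil {F : Type*} [Field F] {d : ℕ} (X : Matrix (Fin d) (Fin d) F) :
    Submodule F (Fin d → F) :=
  LinearMap.ker (X.mulVecLin ^ d)

open Classical in
/-- The projection of `F^d` onto `Vinv X` with kernel `Vnil X`. -/
noncomputable def fittingProj {F : Type*} [Field F] {d : ℕ} (X : Matrix (Fin d) (Fin d) F) :
    (Fin d → F) →ₗ[F] (Fin d → F) :=
  if h : IsCompl (Vinv X) (Vnil X) then
    (Vinv X).subtype ∘ₗ Submodule.linearProjOfIsCompl (Vinv X) (Vnil X) h
  else 0

/-- `N` is a nilpotent-independent subset of `M(d,q)`. -/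
def IsNI {F : Type*} [Field F] {d : ℕ} (N : Set (Matrix (Fin d) (Fin d) F)) : Prop :=
  (∀ X ∈ N, ∀ g : GL (Fin d) F, (↑g⁻¹ : Matrix (Fin d) (Fin d) F) * X * (↑g : Matrix (Fin d) (Fin d) F) ∈ N) ∧
  (∀ X : Matrix (Fin d) (Fin d) F,
    X ∈ N ↔ LinearMap.toMatrix' (X.mulVecLin ∘ₗ fittingProj X) ∈ N)

/-- the block-diagonal matrix `diag(Y, 0)` of size `d`, for `Y` of size `i ≤ d`. -/
def embedBlock {F : Type*} [Field F] (d : ℕ) {i : ℕ} (Y : Matrix (Fin i) (Fin i) F) :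
    Matrix (Fin d) (Fin d) F :=
  Matrix.of fun r c =>
    if h : (r : ℕ) < i ∧ (c : ℕ) < i then Y ⟨r, h.1⟩ ⟨c, h.2⟩ else 0

/-- `N_i`, the invertible matrices of size `i` whose block-diagonal extension lies in `N`. -/
def NIsub {F : Type*} [Field F] {d : ℕ} (N : Set (Matrix (Fin d) (Fin d) F)) (i : ℕ) :
    Set (GL (Fin i) F) :=
  {Y : GL (Fin i) F | embedBlock d (↑Y : Matrix (Fin i) (Fin i) F) ∈ N}

/-- `ω(j,q) = ∏_{k=1}^j (1 - q^{-k})`, with `ω(0,q) = 1`. -/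
noncomputable def omegaqd (j q : ℕ) : ℝ :=
  ∏ k ∈ Finset.Icc 1 j, (1 - ((q : ℝ))⁻¹ ^ k)

section
variable {F : Type*} [Field F]

/-- block diagonal matrix -/
def DD {m n : ℕ} (Y : Matrix (Fin m) (Fin m) F) (Z : Matrix (Fin n) (Fin n) F) :
    Matrix (Fin (m+n)) (Fin (m+n)) F :=
  Matrix.reindexAlgEquiv F F finSumFinEquiv (Matrix.fromBlocks Y 0 0 Z)

lemma DD_mul {m n : ℕ} (Y Y' : Matrix (Fin m) (Fin m) F) (Z Z' : Matrix (Fin n) (Fin n) F) :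
    DD Y Z * DD Y' Z' = DD (Y * Y') (Z * Z') := by
  unfold DD
  rw [← map_mul, Matrix.fromBlocks_multiply]
  simp

lemma DD_one {m n : ℕ} : DD (1 : Matrix (Fin m) (Fin m) F) (1 : Matrix (Fin n) (Fin n) F) = 1 := by
  unfold DD
  rw [Matrix.fromBlocks_one, map_one]

lemma DD_pow {m n : ℕ} (Y : Matrix (Fin m) (Fin m) F) (Z : Matrix (Fin n) (Fin n) F) (k : ℕ) :
    DD Y Z ^ k = DD (Y ^ k) (Z ^ k) := by
  induction k with
  | zero => simp [DD_one]
  | succ k ih => rw [pow_succ, ih, DD_mul, pow_succ, pow_succ]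

lemma DD_inj {m n : ℕ} {Y Y' : Matrix (Fin m) (Fin m) F} {Z Z' : Matrix (Fin n) (Fin n) F}
    (h : DD Y Z = DD Y' Z') : Y = Y' ∧ Z = Z' := by
  have := (Matrix.reindexAlgEquiv F F finSumFinEquiv).injective h
  rw [Matrix.fromBlocks_inj] at this
  exact ⟨this.1, this.2.2.2⟩

lemma embed_eq {m n : ℕ} (Y : Matrix (Fin m) (Fin m) F) :
    embedBlock (m + n) Y = DD Y (0 : Matrix (Fin n) (Fin n) F) := by
  ext r c
  obtain ⟨r, rfl⟩ := (finSumFinEquiv (m := m) (n := n)).surjective r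
  obtain ⟨c, rfl⟩ := (finSumFinEquiv (m := m) (n := n)).surjective c
  rcases r with r | r <;> rcases c with c | c <;> simp [embedBlock, DD]

/-- block diagonal units -/
def DU {m n : ℕ} (A : GL (Fin m) F) (B : GL (Fin n) F) : GL (Fin (m+n)) F where
  val := DD A.1 B.1
  inv := DD A⁻¹.1 B⁻¹.1
  val_inv := by rw [DD_mul]; simp [DD_one]
  inv_val := by rw [DD_mul]; simp [DD_one]

lemma DU_mul {m n : ℕ} (A A' : GL (Fin m) F) (B B' : GL (Fin n) F) :
    DU A B * DU A' B' = DU (A * A') (B * B') := by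
  apply Units.ext
  simp [DU, DD_mul]

lemma DU_inv {m n : ℕ} (A : GL (Fin m) F) (B : GL (Fin n) F) :
    (DU A B)⁻¹ = DU A⁻¹ B⁻¹ := rfl

lemma intertw_zero {m n : ℕ} (Y : GL (Fin m) F) (Z : Matrix (Fin n) (Fin n) F) (hZ : IsNilpotent Z)
    (B : Matrix (Fin m) (Fin n) F) (h : B * Z = Y.1 * B) : B = 0 := by
  obtain ⟨k, hk⟩ := hZ
  have : ∀ j, B * Z ^ j = (Y ^ j).1 * B := by
    intro j
    induction j with
    | zero => simp
    | succ j ih => 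
      rw [pow_succ, ← Matrix.mul_assoc, ih, Matrix.mul_assoc, h, ← Matrix.mul_assoc, pow_succ]; rfl
  have h2 := this k
  rw [hk, Matrix.mul_zero] at h2
  calc B = ((Y^k)⁻¹ * (Y^k)).1 * B := by simp
    _ = (Y^k)⁻¹.1 * ((Y^k).1 * B) := by rw [Units.val_mul, Matrix.mul_assoc]
    _ = 0 := by rw [← h2, Matrix.mul_zero]

lemma intertw_zero' {m n : ℕ} (Y : GL (Fin m) F) (Z : Matrix (Fin n) (Fin n) F) (hZ : IsNilpotent Z)
    (C : Matrix (Fin n) (Fin m) F) (h : C * Y.1 = Z * C) : C = 0 := by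
  obtain ⟨k, hk⟩ := hZ
  have : ∀ j, C * (Y ^ j).1 = Z ^ j * C := by
    intro j
    induction j with
    | zero => simp
    | succ j ih => 
      rw [pow_succ', Units.val_mul, ← Matrix.mul_assoc, h, Matrix.mul_assoc, ih, ← Matrix.mul_assoc, pow_succ']
  have h2 := this k
  rw [hk, Matrix.zero_mul] at h2
  calc C = C * ((Y^k) * (Y^k)⁻¹).1 := by simp
    _ = (C * (Y^k).1) * (Y^k)⁻¹.1  := by rw [Units.val_mul, Matrix.mul_assoc]
    _ = 0 := by rw [h2, Matrix.zero_mul]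

lemma intertw_val {m n : ℕ} (Y Y' : GL (Fin m) F) (Z Z' : Matrix (Fin n) (Fin n) F)
    (hZ : IsNilpotent Z) (hZ' : IsNilpotent Z') (h : Matrix (Fin (m+n)) (Fin (m+n)) F)
    (hh : h * DD Y.1 Z = DD Y'.1 Z' * h) : ∃ A B, h = DD A B := by
  obtain ⟨h, rfl⟩ := (Matrix.reindexAlgEquiv F F (finSumFinEquiv (m := m) (n := n))).surjective h
  unfold DD at hh
  rw [← map_mul, ← map_mul] at hh
  have hh := (Matrix.reindexAlgEquiv F F finSumFinEquiv).injective hh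
  rw [← Matrix.fromBlocks_toBlocks h, Matrix.fromBlocks_multiply, Matrix.fromBlocks_multiply,
    Matrix.fromBlocks_inj] at hh
  simp only [Matrix.mul_zero, Matrix.zero_mul, add_zero, zero_add] at hh
  refine ⟨h.toBlocks₁₁, h.toBlocks₂₂, ?_⟩
  have h1 := intertw_zero Y' Z hZ _ hh.2.1
  have h2 := intertw_zero' Y Z' hZ' _ hh.2.2.1
  unfold DD
  rw [← h1, ← h2, Matrix.fromBlocks_toBlocks]

lemma intertw {m n : ℕ} (Y Y' : GL (Fin m) F) (Z Z' : Matrix (Fin n) (Fin n) F)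
    (hZ : IsNilpotent Z) (hZ' : IsNilpotent Z') (h : GL (Fin (m+n)) F)
    (hh : h.1 * DD Y.1 Z = DD Y'.1 Z' * h.1) : ∃ A B, h = DU A B := by
  obtain ⟨A, B, hAB⟩ := intertw_val Y Y' Z Z' hZ hZ' h.1 hh
  have hh2 : h⁻¹.1 * DD Y'.1 Z' = DD Y.1 Z * h⁻¹.1 := by
    calc h⁻¹.1 * DD Y'.1 Z' = h⁻¹.1 * (DD Y'.1 Z' * h.1) * h⁻¹.1 := by
          rw [Matrix.mul_assoc, Matrix.mul_assoc, ← Units.val_mul]; simp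
      _ = _ := by rw [← hh, ← Matrix.mul_assoc, ← Units.val_mul]; simp
  obtain ⟨A', B', hAB'⟩ := intertw_val Y' Y Z' Z hZ' hZ h⁻¹.1 hh2
  have e1 : h.1 * h⁻¹.1 = 1 := by rw [← Units.val_mul]; simp
  have e2 : h⁻¹.1 * h.1 = 1 := by rw [← Units.val_mul]; simp
  rw [hAB, hAB', DD_mul, ← DD_one] at e1 e2
  obtain ⟨a1, b1⟩ := DD_inj e1
  obtain ⟨a2, b2⟩ := DD_inj e2
  exact ⟨⟨A, A', a1, a2⟩, ⟨B, B', b1, b2⟩, Units.ext hAB⟩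

end
section
variable {F : Type*} [Field F]

lemma mulVecLin_pow' {d : ℕ} (X : Matrix (Fin d) (Fin d) F) (k : ℕ) :
    X.mulVecLin ^ k = (X ^ k).mulVecLin := by
  induction k with
  | zero => simp [Module.End.one_eq_id]
  | succ k ih => rw [pow_succ, ih, pow_succ, Matrix.mulVecLin_mul]; rfl

lemma fitting_isCompl {d : ℕ} (X : Matrix (Fin d) (Fin d) F) : IsCompl (Vinv X) (Vnil X) := by
  unfold Vinv Vnil
  rw [Submodule.isCompl_iff_disjoint _ _ (LinearMap.finrank_range_add_finrank_ker _).ge,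
    Submodule.disjoint_def]
  rintro _ ⟨u, rfl⟩ h
  have h1 : Module.finrank F (Fin d → F) ≤ d := by simp
  have h2 : Module.finrank F (Fin d → F) ≤ d + d := by simp
  have h3 := (Module.End.ker_pow_eq_ker_pow_finrank_of_le (f := X.mulVecLin) h2).trans
    (Module.End.ker_pow_eq_ker_pow_finrank_of_le (f := X.mulVecLin) h1).symm
  have : u ∈ LinearMap.ker (X.mulVecLin ^ (d + d)) := by
    rw [LinearMap.mem_ker, pow_add]
    exact h
  rw [h3] at this
  exact this

lemma fittingProj_inv {d : ℕ} (X : Matrix (Fin d) (Fin d) F) (v : Fin d → F) (hv : v ∈ Vinv X) :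
    fittingProj X v = v := by
  unfold fittingProj
  rw [dif_pos (fitting_isCompl X)]
  have := Submodule.projectionOnto_apply_left (fitting_isCompl X) ⟨v, hv⟩
  simp only [LinearMap.comp_apply]
  exact congrArg Subtype.val this

lemma fittingProj_nil {d : ℕ} (X : Matrix (Fin d) (Fin d) F) (v : Fin d → F) (hv : v ∈ Vnil X) :
    fittingProj X v = 0 := by
  unfold fittingProj
  rw [dif_pos (fitting_isCompl X)]
  have := Submodule.projectionOnto_apply_right (fitting_isCompl X) ⟨v, hv⟩
  simp only [LinearMap.comp_apply]
  exact congrArg Subtype.val this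

lemma fittingProj_eq {d : ℕ} (X Q : Matrix (Fin d) (Fin d) F)
    (h : X ^ d * (X ^ d * Q) = X ^ d) : fittingProj X = (X ^ d * Q).mulVecLin := by
  refine LinearMap.ext fun v => ?_
  set P := X ^ d * Q with hP
  have e : v = P *ᵥ v + (v - P *ᵥ v) := by abel
  conv_lhs => rw [e]
  rw [map_add, fittingProj_inv, fittingProj_nil, add_zero]
  · rfl
  · unfold Vnil
    rw [LinearMap.mem_ker, mulVecLin_pow', map_sub]
    simp only [Matrix.mulVecLin_apply, Matrix.mulVec_mulVec, h, sub_self]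
  · unfold Vinv
    rw [mulVecLin_pow']
    exact ⟨Q *ᵥ v, by simp [hP]⟩

lemma nil_pow {n d : ℕ} (hnd : n ≤ d) (Z : Matrix (Fin n) (Fin n) F) (hZ : IsNilpotent Z) :
    Z ^ d = 0 := by
  have h1 : Z ^ n = 0 := by
    have h := (Matrix.isNilpotent_charpoly_sub_pow_of_isNilpotent hZ).eq_zero
    have h2 := Matrix.aeval_self_charpoly Z
    rw [sub_eq_zero.1 h] at h2
    simpa using h2
  exact pow_eq_zero_of_le hnd h1

lemma fit_DD {m n : ℕ} (Y : GL (Fin m) F) (Z : Matrix (Fin n) (Fin n) F) (hZ : IsNilpotent Z) :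
    LinearMap.toMatrix' ((DD Y.1 Z).mulVecLin ∘ₗ fittingProj (DD Y.1 Z)) = DD Y.1 0 := by
  have hz := nil_pow (d := m + n) (by omega) Z hZ
  have hy : Y.1 ^ (m + n) * (Y⁻¹ ^ (m+n)).1 = 1 := by
    rw [← Units.val_pow_eq_pow_val, ← Units.val_mul]; simp
  have e : DD Y.1 Z ^ (m + n) * DD (Y⁻¹ ^ (m+n)).1 (0 : Matrix (Fin n) (Fin n) F) = DD 1 0 := by
    rw [DD_pow, DD_mul, hy, Matrix.mul_zero]
  rw [fittingProj_eq _ (DD (Y⁻¹ ^ (m+n)).1 0), e, ← Matrix.mulVecLin_mul, DD_mul]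
  · rw [← Matrix.toLin'_apply', LinearMap.toMatrix'_toLin']
    simp
  · rw [e, DD_pow, DD_mul, hz]
    simp

lemma mem_DD {m n : ℕ} {N : Set (Matrix (Fin (m+n)) (Fin (m+n)) F)} (hN : IsNI N)
    (Y : GL (Fin m) F) (Z : Matrix (Fin n) (Fin n) F) (hZ : IsNilpotent Z) :
    DD Y.1 Z ∈ N ↔ Y ∈ NIsub N m := by
  rw [hN.2, fit_DD Y Z hZ]
  unfold NIsub
  rw [Set.mem_ofPred_eq, embed_eq]

lemma mem_conj {d : ℕ} {N : Set (Matrix (Fin d) (Fin d) F)} (hN : IsNI N)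
    (g : GL (Fin d) F) (X : Matrix (Fin d) (Fin d) F) :
    g.1 * X * g⁻¹.1 ∈ N ↔ X ∈ N := by
  constructor
  · intro h
    have := hN.1 _ h g
    have e : g⁻¹.1 * (g.1 * X * g⁻¹.1) * g.1 = (g⁻¹ * g).1 * X * (g⁻¹ * g).1 := by
      simp only [Units.val_mul, Matrix.mul_assoc]
    rw [e] at this
    simpa using this
  · intro h
    have := hN.1 _ h g⁻¹
    rwa [inv_inv] at this

lemma conj_pow' {d : ℕ} (g : GL (Fin d) F) (X : Matrix (Fin d) (Fin d) F) (k : ℕ) :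
    (g.1 * X * g⁻¹.1) ^ k = g.1 * X ^ k * g⁻¹.1 := by
  exact Units.conj_pow g X k

lemma finrank_Vinv {m n : ℕ} (g : GL (Fin (m+n)) F) (Y : GL (Fin m) F)
    (Z : Matrix (Fin n) (Fin n) F) (hZ : IsNilpotent Z) :
    Module.finrank F (Vinv (g.1 * DD Y.1 Z * g⁻¹.1)) = m := by
  unfold Vinv
  rw [mulVecLin_pow', conj_pow']
  change Matrix.rank _ = m
  have hdet : ∀ {d : ℕ} (g : GL (Fin d) F), IsUnit g.1.det := fun g => 
    (Matrix.isUnit_iff_isUnit_det _).1 g.isUnit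
  rw [Matrix.rank_mul_eq_left_of_isUnit_det _ _ (hdet _),
    Matrix.rank_mul_eq_right_of_isUnit_det _ _ (hdet _), DD_pow, nil_pow (by omega) Z hZ]
  have e : DD (Y.1 ^ (m+n)) (0 : Matrix (Fin n) (Fin n) F) =
      (DU (Y^(m+n)) 1).1 * DD 1 (0 : Matrix (Fin n) (Fin n) F) := by
    simp [DU, DD_mul]
  rw [e, Matrix.rank_mul_eq_right_of_isUnit_det _ _ (hdet _)]
  unfold DD
  rw [Matrix.coe_reindexAlgEquiv, Matrix.rank_reindex]
  have e2 : (Matrix.fromBlocks 1 0 0 0 : Matrix (Fin m ⊕ Fin n) (Fin m ⊕ Fin n) F) =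
      Matrix.diagonal (Sum.elim 1 0) := by
    ext i j; rcases i with i | i <;> rcases j with j | j <;> simp [Matrix.one_apply, Matrix.diagonal_apply]
  classical
  rw [e2, Matrix.rank_diagonal, Fintype.card_subtype, Finset.card_filter, Fintype.sum_sum_type]
  simp

lemma exists_decomp {m n : ℕ} (X : Matrix (Fin (m+n)) (Fin (m+n)) F)
    (hX : Module.finrank F (Vinv X) = m) :
    ∃ (g : GL (Fin (m+n)) F) (Y : GL (Fin m) F) (Z : Matrix (Fin n) (Fin n) F),
      IsNilpotent Z ∧ g.1 * DD Y.1 Z * g⁻¹.1 = X := by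
  set f := X.mulVecLin with hf
  have hc := fitting_isCompl X
  have hn : Module.finrank F (Vnil X) = n := by
    have := Submodule.finrank_add_eq_of_isCompl hc
    rw [hX] at this
    simpa using this
  have hi : ∀ x ∈ Vinv X, f x ∈ Vinv X := by
    rintro _ ⟨u, rfl⟩
    exact ⟨f u, by rw [← hf, ← Module.End.mul_apply, ← Module.End.mul_apply, ← pow_succ, pow_succ']⟩
  have hk : ∀ x ∈ Vnil X, f x ∈ Vnil X := by
    intro u hu
    unfold Vnil at *
    rw [LinearMap.mem_ker, ← hf] at *
    rw [← Module.End.mul_apply, ← pow_succ, pow_succ', Module.End.mul_apply, hu, map_zero]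
  let b1 : Module.Basis (Fin m) F (Vinv X) := Module.finBasisOfFinrankEq F _ hX
  let b2 : Module.Basis (Fin n) F (Vnil X) := Module.finBasisOfFinrankEq F _ hn
  let E := Submodule.prodEquivOfIsCompl _ _ hc
  let b0 := (b1.prod b2).map E
  let b := b0.reindex finSumFinEquiv
  let s := Pi.basisFun F (Fin (m+n))
  let f1 := f.restrict hi
  let f2 := f.restrict hk
  have hblock : LinearMap.toMatrix b b f = DD (LinearMap.toMatrix b1 b1 f1) (LinearMap.toMatrix b2 b2 f2) := by
    unfold DD
    rw [← LinearMap.toMatrix_prodMap]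
    ext i j
    obtain ⟨i, rfl⟩ := (finSumFinEquiv (m := m) (n := n)).surjective i
    obtain ⟨j, rfl⟩ := (finSumFinEquiv (m := m) (n := n)).surjective j
    simp only [LinearMap.toMatrix_apply, b, b0, Matrix.coe_reindexAlgEquiv, Matrix.reindex_apply,
      Matrix.submatrix_apply, Equiv.symm_apply_apply, Module.Basis.repr_reindex_apply,
      Module.Basis.reindex_apply, Module.Basis.map_repr, Module.Basis.map_apply,
      LinearEquiv.trans_apply]
    congr 2
    rw [LinearEquiv.symm_apply_eq]
    simp [E, f1, f2, Submodule.coe_prodEquivOfIsCompl']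
  have hinj : Function.Injective f1 := by
    rw [injective_iff_map_eq_zero]
    intro x hx
    have h0 : f x.1 = 0 := congrArg Subtype.val hx
    have h1 : x.1 ∈ Vnil X := by
      unfold Vnil
      rw [LinearMap.mem_ker, ← hf]
      rcases Nat.eq_zero_or_pos (m+n) with h | h
      · have : Subsingleton (Fin (m+n) → F) := by rw [h]; infer_instance
        exact Subsingleton.elim _ _
      · obtain ⟨c, hc⟩ := Nat.exists_eq_succ_of_ne_zero h.ne'
        have : (f ^ (m+n)) x.1 = (f ^ (c+1)) x.1 := by
          congr 2
        rw [this, pow_succ, Module.End.mul_apply, h0, map_zero]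
    exact Subtype.ext ((Submodule.disjoint_def.1 hc.1) _ x.2 h1)
  have hu : IsUnit (LinearMap.toMatrix b1 b1 f1) := by
    rw [LinearMap.isUnit_toMatrix_iff]
    exact (LinearMap.isUnit_iff_ker_eq_bot f1).2 (LinearMap.ker_eq_bot.2 hinj)
  have hnil : IsNilpotent (LinearMap.toMatrix b2 b2 f2) := by
    refine ⟨m+n, ?_⟩
    rw [LinearMap.toMatrix_pow]
    have : f2 ^ (m+n) = 0 := by
      ext1 x
      apply Subtype.ext
      rw [Module.End.pow_restrict]
      exact x.2
    rw [this, map_zero]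
  obtain ⟨Y, hY⟩ := hu
  have hsb : s.toMatrix b * b.toMatrix s = 1 := Module.Basis.toMatrix_mul_toMatrix_flip _ _
  have hbs : b.toMatrix s * s.toMatrix b = 1 := Module.Basis.toMatrix_mul_toMatrix_flip _ _
  refine ⟨⟨s.toMatrix b, b.toMatrix s, hsb, hbs⟩, Y, _, hnil, ?_⟩
  rw [hY, ← hblock]
  change s.toMatrix b * LinearMap.toMatrix b b f * b.toMatrix s = X
  rw [basis_toMatrix_mul_linearMap_toMatrix_mul_basis_toMatrix]
  simp only [s, hf, ← Matrix.toLin'_apply', ← Matrix.toLin_eq_toLin', LinearMap.toMatrix_toLin]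

end
section
variable {F : Type*} [Field F] [Fintype F]

/-- number of nilpotent matrices -/
noncomputable def nilCard (F : Type*) [Field F] (n : ℕ) : ℕ :=
  Nat.card {Z : Matrix (Fin n) (Fin n) F // IsNilpotent Z}

lemma NIsub_conj {m n : ℕ} {N : Set (Matrix (Fin (m+n)) (Fin (m+n)) F)} (hN : IsNI N)
    (A Y : GL (Fin m) F) (hY : Y ∈ NIsub N m) : A⁻¹ * Y * A ∈ NIsub N m := by
  have h0 : IsNilpotent (0 : Matrix (Fin n) (Fin n) F) := IsNilpotent.zero
  rw [← mem_DD hN _ _ h0] at *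
  have := hN.1 _ hY (DU A 1)
  rw [DU_inv] at this
  simpa [DU, DD_mul] using this

lemma nil_conj {n : ℕ} (B : GL (Fin n) F) (Z : Matrix (Fin n) (Fin n) F) (hZ : IsNilpotent Z) :
    IsNilpotent (B⁻¹.1 * Z * B.1) := by
  obtain ⟨k, hk⟩ := hZ
  refine ⟨k, ?_⟩
  have := Units.conj_pow B⁻¹ Z k
  rw [inv_inv] at this
  rw [this, hk]; simp

lemma key {m n : ℕ} {N : Set (Matrix (Fin (m+n)) (Fin (m+n)) F)} (hN : IsNI N) :
    Nat.card {X : Matrix (Fin (m+n)) (Fin (m+n)) F // X ∈ N ∧ Module.finrank F (Vinv X) = m} *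
      (Nat.card (GL (Fin m) F) * Nat.card (GL (Fin n) F)) =
    Nat.card (GL (Fin (m+n)) F) * (Nat.card (NIsub N m) * nilCard F n) := by
  classical
  unfold nilCard
  simp only [← Nat.card_prod]
  have hex : ∀ X : {X : Matrix (Fin (m+n)) (Fin (m+n)) F // X ∈ N ∧ Module.finrank F (Vinv X) = m},
      ∃ (g : GL (Fin (m+n)) F) (Y : NIsub N m) (Z : {Z : Matrix (Fin n) (Fin n) F // IsNilpotent Z}),
        g.1 * DD Y.1.1 Z.1 * g⁻¹.1 = X.1 := by
    rintro ⟨X, hX, hr⟩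
    obtain ⟨g, Y, Z, hZ, h⟩ := exists_decomp X hr
    refine ⟨g, ⟨Y, ?_⟩, ⟨Z, hZ⟩, h⟩
    rw [← h, mem_conj hN, mem_DD hN Y Z hZ] at hX
    exact hX
  choose g Y Z h using hex
  have conjform : ∀ (g : GL (Fin (m+n)) F) (A : GL (Fin m) F) (B : GL (Fin n) F) (Y : GL (Fin m) F)
      (Z : Matrix (Fin n) (Fin n) F),
      (g * DU A B).1 * DD (A⁻¹ * Y * A).1 (B⁻¹.1 * Z * B.1) * (g * DU A B)⁻¹.1 = g.1 * DD Y.1 Z * g⁻¹.1 := by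
    intro g A B Y Z
    have : DD (A⁻¹ * Y * A).1 (B⁻¹.1 * Z * B.1) = (DU A B)⁻¹.1 * DD Y.1 Z * (DU A B).1 := by
      rw [DU_inv]; simp [DU, DD_mul]
    rw [this, _root_.mul_inv_rev, Units.val_mul, Units.val_mul]
    calc _ = g.1 * ((DU A B).1 * (DU A B)⁻¹.1) * DD Y.1 Z * ((DU A B).1 * (DU A B)⁻¹.1) * g⁻¹.1 := by
            simp only [Matrix.mul_assoc]
      _ = _ := by rw [Units.mul_inv]; simp
  refine Nat.card_eq_of_bijective (fun p => (g p.1 * DU p.2.1 p.2.2,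
    (⟨p.2.1⁻¹ * (Y p.1).1 * p.2.1, NIsub_conj hN _ _ (Y p.1).2⟩,
     ⟨p.2.2⁻¹.1 * (Z p.1).1 * p.2.2.1, nil_conj _ _ (Z p.1).2⟩))) ⟨?_, ?_⟩
  · rintro ⟨X, A, B⟩ ⟨X', A', B'⟩ hh
    simp only [Prod.mk.injEq, Subtype.mk.injEq] at hh
    obtain ⟨h1, h2, h3⟩ := hh
    have e1 := conjform (g X) A B (Y X).1 (Z X).1
    have e2 := conjform (g X') A' B' (Y X').1 (Z X').1
    rw [h] at e1 e2
    rw [h1, h2, h3, e2] at e1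
    have hX : X = X' := Subtype.ext e1.symm
    subst hX
    have h4 := DD_inj (congrArg Units.val (mul_left_cancel h1))
    rw [Units.ext h4.1, Units.ext h4.2]
  · rintro ⟨g', ⟨Y', hY'⟩, ⟨Z', hZ'⟩⟩
    let X : {X : Matrix (Fin (m+n)) (Fin (m+n)) F // X ∈ N ∧ Module.finrank F (Vinv X) = m} :=
      ⟨g'.1 * DD Y'.1 Z' * g'⁻¹.1, by rw [mem_conj hN, mem_DD hN _ _ hZ']; exact hY', 
        finrank_Vinv _ _ _ hZ'⟩
    have hX := h X
    have hX2 : (g X).1 * DD (Y X).1.1 (Z X).1 * (g X)⁻¹.1 = g'.1 * DD Y'.1 Z' * g'⁻¹.1 := hX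
    have hi : ((g X)⁻¹ * g').1 * DD Y'.1 Z' = DD (Y X).1.1 (Z X).1 * ((g X)⁻¹ * g').1 := by
      have := congrArg (fun M => (g X)⁻¹.1 * M * g'.1) hX2
      calc _ = (g X)⁻¹.1 * (g'.1 * DD Y'.1 Z' * g'⁻¹.1) * g'.1 := by
            simp only [Units.val_mul, Matrix.mul_assoc, Units.inv_mul, Matrix.mul_one]
        _ = ((g X)⁻¹.1 * (g X).1) * DD (Y X).1.1 (Z X).1 * ((g X)⁻¹ * g').1 := by
            rw [← this]; simp only [Units.val_mul, Matrix.mul_assoc]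
        _ = _ := by rw [Units.inv_mul, Matrix.one_mul]
    obtain ⟨A, B, hAB⟩ := intertw _ _ _ _ hZ' (Z X).2 _ hi
    have hg : g X * DU A B = g' := by rw [← hAB]; simp
    have h5 : DD Y'.1 Z' = DD (A⁻¹ * (Y X).1 * A).1 (B⁻¹.1 * (Z X).1 * B.1) := by
      rw [hAB] at hi
      calc DD Y'.1 Z' = (DU A B)⁻¹.1 * ((DU A B).1 * DD Y'.1 Z') := by
            rw [← Matrix.mul_assoc, Units.inv_mul, Matrix.one_mul]
        _ = _ := by rw [hi, DU_inv]; simp [DU, DD_mul, Matrix.mul_assoc]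
    obtain ⟨h6, h7⟩ := DD_inj h5
    refine ⟨(X, A, B), ?_⟩
    simp only [Prod.mk.injEq, Subtype.mk.injEq]
    exact ⟨hg, Units.ext h6.symm, h7.symm⟩

lemma card_split {d : ℕ} (N : Set (Matrix (Fin d) (Fin d) F)) :
    Nat.card N = ∑ i ∈ Finset.range (d+1),
      Nat.card {X : Matrix (Fin d) (Fin d) F // X ∈ N ∧ Module.finrank F (Vinv X) = i} := by
  classical
  have : ∀ p : Matrix (Fin d) (Fin d) F → Prop, Nat.card {X // p X} = #{X | p X} := by
    intro p; rw [Nat.card_eq_fintype_card, Fintype.card_subtype]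
  simp only [this]
  rw [Finset.card_eq_sum_card_fiberwise (f := fun X => Module.finrank F (Vinv X)) 
    (t := Finset.range (d+1))]
  · simp only [Finset.filter_filter]
    refine Finset.sum_congr rfl fun _ _ => ?_
    congr
  · intro X _
    have := Submodule.finrank_le (Vinv X)
    simp at this
    simp; omega

lemma GL_pos (n : ℕ) : (0:ℝ) < Nat.card (GL (Fin n) F) := by
  classical
  exact_mod_cast Nat.card_pos

lemma key_real {d : ℕ} {N : Set (Matrix (Fin d) (Fin d) F)} (hN : IsNI N) :
    (Nat.card N : ℝ) / Nat.card (GL (Fin d) F) = ∑ i ∈ Finset.range (d+1),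
      ((Nat.card (NIsub N i) : ℝ) / Nat.card (GL (Fin i) F)) *
        ((nilCard F (d - i) : ℝ) / Nat.card (GL (Fin (d - i)) F)) := by
  rw [card_split N]
  push_cast
  rw [Finset.sum_div]
  refine Finset.sum_congr rfl fun i hi => ?_
  obtain ⟨n, rfl⟩ : ∃ n, d = i + n := ⟨d - i, by simp at hi; omega⟩
  have h := key hN
  rw [Nat.add_sub_cancel_left]
  have h1 := GL_pos (F := F) i
  have h2 := GL_pos (F := F) n
  have h3 := GL_pos (F := F) (i + n)
  rw [div_mul_div_comm, div_eq_div_iff h3.ne' (by positivity)]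
  have h' : ((_ : ℕ) : ℝ) = ((_ : ℕ) : ℝ) := congrArg Nat.cast h
  push_cast at h'
  rw [h']; ring

/-- `q^(d^2)/|GL_d|` -/
noncomputable def uu (F : Type*) [Field F] [Fintype F] (d : ℕ) : ℝ :=
  (Fintype.card F : ℝ) ^ (d ^ 2) / Nat.card (GL (Fin d) F)

lemma univ_NI {d : ℕ} : IsNI (Set.univ : Set (Matrix (Fin d) (Fin d) F)) :=
  ⟨fun _ _ _ => trivial, fun _ => Iff.rfl.trans (by simp)⟩

lemma uu_sum (d : ℕ) : uu F d = ∑ j ∈ Finset.range (d+1),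
    (nilCard F j : ℝ) / Nat.card (GL (Fin j) F) := by
  classical
  have h := key_real (F := F) (d := d) univ_NI
  have e : Nat.card (Set.univ : Set (Matrix (Fin d) (Fin d) F)) = (Fintype.card F) ^ (d^2) := by
    rw [Nat.card_univ, Nat.card_eq_fintype_card, Fintype.card_congr Matrix.of.symm]
    simp [sq, pow_mul]
  rw [e] at h
  unfold uu
  push_cast at h
  rw [h, ← Finset.sum_range_reflect (fun j => (nilCard F j : ℝ) / Nat.card (GL (Fin j) F))]
  refine Finset.sum_congr rfl fun i hi => ?_
  have e2 : NIsub (Set.univ : Set (Matrix (Fin d) (Fin d) F)) i = Set.univ := by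
    ext; simp [NIsub]
  rw [e2, Nat.card_univ, div_self (GL_pos i).ne', one_mul]
  simp

lemma GL_succ (d : ℕ) : (Nat.card (GL (Fin (d+1)) F) : ℝ) =
    ((Fintype.card F : ℝ) ^ (d+1) - 1) * (Fintype.card F : ℝ) ^ d * Nat.card (GL (Fin d) F) := by
  have hq : 0 < Fintype.card F := Fintype.card_pos
  have : Nat.card (GL (Fin (d+1)) F) =
    (Fintype.card F ^ (d+1) - 1) * Fintype.card F ^ d * Nat.card (GL (Fin d) F) := by
    rw [Matrix.card_GL_field, Matrix.card_GL_field, Fin.prod_univ_succ]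
    have : ∀ i : Fin d, Fintype.card F ^ (d+1) - Fintype.card F ^ ((i.succ : Fin (d+1)) : ℕ) =
      Fintype.card F * (Fintype.card F ^ d - Fintype.card F ^ (i:ℕ)) := by
      intro i
      rw [Nat.mul_sub, Fin.val_succ, pow_succ', pow_succ']
    simp only [this, Finset.prod_mul_distrib]
    simp [mul_assoc]
  rw [this]
  push_cast
  rw [Nat.cast_sub (Nat.one_le_pow _ _ hq)]
  push_cast; ring

lemma uu_pos (d : ℕ) : 0 < uu F d := by
  have hq : (0:ℝ) < Fintype.card F := by exact_mod_cast Fintype.card_pos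
  exact div_pos (by positivity) (GL_pos d)

lemma uu_succ (d : ℕ) : uu F d = (1 - ((Fintype.card F : ℝ))⁻¹ ^ (d+1)) * uu F (d+1) := by
  have hq : (1:ℝ) < Fintype.card F := by exact_mod_cast Fintype.one_lt_card
  have h1 := GL_pos (F := F) d
  have hq1 : (1:ℝ) < (Fintype.card F : ℝ) ^ (d+1) := one_lt_pow₀ hq (by omega)
  have hq2 : (Fintype.card F : ℝ) ^ (d+1) - 1 ≠ 0 := by linarith
  unfold uu
  rw [GL_succ, inv_pow]
  have e : (d+1)^2 = d^2 + d + (d+1) := by ring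
  rw [e, pow_add _ (d^2 + d), pow_add _ (d^2)]
  have hq3 : (Fintype.card F : ℝ) ^ (d+1) ≠ 0 := by positivity
  have hq4 : (Fintype.card F : ℝ) ^ d ≠ 0 := by positivity
  generalize (Fintype.card F : ℝ) ^ (d+1) = x at *
  generalize (Fintype.card F : ℝ) ^ d = y at *
  have := h1.ne'
  field_simp

lemma uu_mono : Monotone (uu F) := by
  refine monotone_nat_of_le_succ fun d => ?_
  rw [uu_succ d]
  have : (0:ℝ) ≤ ((Fintype.card F : ℝ))⁻¹ ^ (d+1) := by positivity
  nlinarith [uu_pos (F := F) (d+1)]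

lemma uu_zero : uu F 0 = 1 := by
  unfold uu
  rw [Matrix.card_GL_field]; simp

lemma nil_ratio (j : ℕ) : (nilCard F j : ℝ) / Nat.card (GL (Fin j) F) =
    ((Fintype.card F : ℝ))⁻¹ ^ j * uu F j := by
  rcases j with _ | j
  · have := uu_sum (F := F) 0
    simp only [zero_add, Finset.sum_range_one] at this
    rw [← this]; simp
  · have h1 := uu_sum (F := F) (j+1)
    rw [Finset.sum_range_succ, ← uu_sum] at h1
    have h2 := uu_succ (F := F) j
    linarith

end

lemma pow_bound (d : ℕ) : (d : ℝ) ≤ (3/2 : ℝ) ^ d := by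
  have h : ∀ n : ℕ, ((n + 2 : ℕ) : ℝ) ≤ (3/2 : ℝ) ^ (n+2) := by
    intro n
    induction n with
    | zero => norm_num
    | succ n ih =>
      rw [show n + 1 + 2 = (n+2)+1 by ring, pow_succ]
      push_cast at *
      have : (0:ℝ) ≤ n := by positivity
      nlinarith
  rcases d with _ | _ | d
  · norm_num
  · norm_num
  · exact h d

theorem stmt7 (q d : ℕ) (hq : IsPrimePow q) (hd : 0 < d)
    (F : Type*) [Field F] [Fintype F] (hF : Fintype.card F = q)
    (N : Set (Matrix (Fin d) (Fin d) F)) (hN : IsNI N) (a k : ℝ) (ha : 0 < a) (hk : 0 < k)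
    (hbound : ∀ i : ℕ, 1 ≤ i → i ≤ d →
      a - k * ((q : ℝ))⁻¹ ^ i ≤ (Nat.card (NIsub N i) : ℝ) / Nat.card (GL (Fin i) F)) :
    a - (a + k) * d * ((q : ℝ))⁻¹ ^ d ≤ (Nat.card N : ℝ) / (q : ℝ) ^ (d ^ 2) ∧
      a - (a + k) * (2 * (q : ℝ) / 3)⁻¹ ^ d ≤ a - (a + k) * d * ((q : ℝ))⁻¹ ^ d := by
  subst hF
  have hq1 : (1:ℝ) < Fintype.card F := by exact_mod_cast Fintype.one_lt_card
  have hq0 : (0:ℝ) < Fintype.card F := by linarith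
  have hd1 : (1:ℝ) ≤ d := by exact_mod_cast hd
  refine ⟨?_, ?_⟩
  · have hu := uu_pos (F := F) d
    set x : ℝ := ((Fintype.card F : ℝ))⁻¹ with hx
    have hx0 : 0 < x := by positivity
    have h1 := key_real hN
    have hmul : (Nat.card N : ℝ) / (Fintype.card F : ℝ) ^ (d ^ 2) * uu F d =
        (Nat.card N : ℝ) / Nat.card (GL (Fin d) F) := by
      unfold uu
      have := GL_pos (F := F) d
      field_simp
    have h2 := uu_sum (F := F) d
    simp only [nil_ratio, ← hx] at h1 h2
    rw [← Finset.sum_range_reflect] at h2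
    simp only [Nat.add_sub_cancel] at h2
    rw [Finset.sum_range_succ'] at h1 h2
    simp only [Nat.sub_zero] at h1 h2
    have hlow : ∑ i ∈ Finset.range d, (a * (x ^ (d - (i+1)) * uu F (d - (i+1))) - k * (x ^ d * uu F d)) ≤
        ∑ i ∈ Finset.range d, ((Nat.card (NIsub N (i+1)) : ℝ) / Nat.card (GL (Fin (i+1)) F)) *
          (x ^ (d - (i+1)) * uu F (d - (i+1))) := by
      refine Finset.sum_le_sum fun i hi => ?_
      have hi' : i + 1 ≤ d := by simpa using hi
      have hb := hbound (i+1) (by omega) hi'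
      have hpos : 0 ≤ x ^ (d - (i+1)) * uu F (d - (i+1)) := by
        have := uu_pos (F := F) (d - (i+1)); positivity
      have h3 := mul_le_mul_of_nonneg_right hb hpos
      refine le_trans ?_ h3
      have h4 : x ^ (i+1) * (x ^ (d - (i+1)) * uu F (d - (i+1))) ≤ x ^ d * uu F d := by
        rw [← mul_assoc, ← pow_add, Nat.add_sub_cancel' hi']
        exact mul_le_mul_of_nonneg_left (uu_mono (by omega)) (by positivity)
      have h5 := mul_le_mul_of_nonneg_left h4 hk.le
      linarith
    rw [Finset.sum_sub_distrib, ← Finset.mul_sum, Finset.sum_const, Finset.card_range,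
      nsmul_eq_mul] at hlow
    have hnn : 0 ≤ ((Nat.card (NIsub N 0) : ℝ) / Nat.card (GL (Fin 0) F)) * (x ^ d * uu F d) := by
      positivity
    have hfin : (a - (a + k) * d * x ^ d) * uu F d ≤
        (Nat.card N : ℝ) / (Fintype.card F : ℝ) ^ (d ^ 2) * uu F d := by
      rw [hmul, h1]
      have h6 : a * (x ^ d * uu F d) ≤ a * (x ^ d * uu F d) * d :=
        le_mul_of_one_le_right (by positivity) hd1
      have h7 : a * ∑ i ∈ Finset.range d, x ^ (d - (i+1)) * uu F (d - (i+1)) =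
          a * uu F d - a * (x ^ d * uu F d) := by
        rw [← mul_sub]; congr 1; linarith
      linarith
    exact le_of_mul_le_mul_right hfin hu
  · have h := pow_bound d
    have e : (2 * (Fintype.card F : ℝ) / 3)⁻¹ ^ d = (3/2 : ℝ)^d * ((Fintype.card F : ℝ))⁻¹ ^ d := by
      rw [← mul_pow]; congr 1; field_simp
    rw [e]
    have hp : (0:ℝ) ≤ (a + k) * ((Fintype.card F : ℝ))⁻¹ ^ d := by positivity
    have := mul_le_mul_of_nonneg_right h hp
    linarith
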